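/- arXiv:2411.07266 — 2 statements merged into one kernel-verified Lean document; each statement's English description precedes it below -/
import Mathlib

section
/- Let T be a tree of order n ≥ 2 with s support vertices and l pendant vertices (leaves). Then γ_MR(T) ≤ ⌈(n + 7s − 5l)/4⌉. -/
open Finset

namespace MRD

variable {V : Type*}

open scoped Classical

/-- Sum of `f` over the closed neighborhood of `v` in `G`:
`f(N[v]) = \sum_{u \in N[v]} f(u)`. -/
noncomputable def closedNbhdSum [Fintype V] (G : SimpleGraph V) (f : V → ℤ) (v : V) : ℤ :=
  ∑ u ∈ Finset.univ.filter (fun u => G.Adj v u ∨ u = v), f u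

/-- `f : V → {-1, 1, 2}` is a Majority Roman Dominating Function (MRDF) on `G`:
(i) `f(N[v]) ≥ 1` for at least half of the vertices, and (ii) every vertex with value `-1`
is adjacent to a vertex with value `2`. -/
noncomputable def IsMRDF [Fintype V] (G : SimpleGraph V) (f : V → ℤ) : Prop :=
  (∀ v, f v = -1 ∨ f v = 1 ∨ f v = 2) ∧
  Fintype.card V ≤ 2 * (Finset.univ.filter (fun v => 1 ≤ closedNbhdSum G f v)).card ∧
  (∀ u, f u = -1 → ∃ w, G.Adj u w ∧ f w = 2)

/-- The majority Roman domination number `γ_MR(G)`: the minimum weight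
`w(f) = ∑_v f(v)` over all MRDFs `f` on `G`. -/
noncomputable def mrdNum [Fintype V] (G : SimpleGraph V) : ℤ :=
  sInf {w : ℤ | ∃ f : V → ℤ, IsMRDF G f ∧ w = ∑ v, f v}

/-- The join `G ∨ H` of two simple graphs: disjoint union plus all edges between the parts. -/
def join {α β : Type*} (G : SimpleGraph α) (H : SimpleGraph β) : SimpleGraph (α ⊕ β) where
  Adj x y :=
    match x, y with
    | .inl a, .inl b => G.Adj a b
    | .inr a, .inr b => H.Adj a b
    | .inl _, .inr _ => True
    | .inr _, .inl _ => True
  symm := ⟨by rintro (a | a) (b | b) h <;> simp_all [SimpleGraph.adj_comm]⟩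
  loopless := ⟨by rintro (a | a) h <;> simp_all⟩

/-- The corona `G ∘ H` of two simple graphs: one copy of `G` and `|V(G)|` copies of `H`,
where the `v`-th vertex of `G` is joined to every vertex of the `v`-th copy of `H`. -/
def corona {α β : Type*} (G : SimpleGraph α) (H : SimpleGraph β) : SimpleGraph (α ⊕ α × β) where
  Adj x y :=
    match x, y with
    | .inl u, .inl v => G.Adj u v
    | .inr p, .inr q => p.1 = q.1 ∧ H.Adj p.2 q.2
    | .inl u, .inr p => u = p.1
    | .inr p, .inl u => u = p.1
  symm := ⟨by
    rintro (u | ⟨u, x⟩) (v | ⟨v, y⟩) h <;> simp_all [SimpleGraph.adj_comm, eq_comm]⟩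
  loopless := ⟨by rintro (u | ⟨u, x⟩) h <;> simp_all⟩

/-- `S` is a dominating set of `G`. -/
def IsDomSet (G : SimpleGraph V) (S : Finset V) : Prop :=
  ∀ v, v ∉ S → ∃ u ∈ S, G.Adj v u

/-- The domination number `γ(G)`. -/
noncomputable def domNum [Fintype V] (G : SimpleGraph V) : ℕ :=
  sInf {k | ∃ S : Finset V, IsDomSet G S ∧ S.card = k}

/-- A set of vertices is independent if no two of its vertices are adjacent. -/
def IsIndepSet (G : SimpleGraph V) (S : Finset V) : Prop :=
  ∀ a ∈ S, ∀ b ∈ S, ¬ G.Adj a b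

/-- The independence number `β₀(G)`. -/
noncomputable def indepNum [Fintype V] (G : SimpleGraph V) : ℕ :=
  sSup {k | ∃ S : Finset V, IsIndepSet G S ∧ S.card = k}

/-- The cocktail party graph `K_{2n} - M` (complete graph minus a perfect matching),
realized on `Fin n × Fin 2`: `(i,a)` and `(j,b)` are adjacent iff `i ≠ j`. -/
def cocktail (n : ℕ) : SimpleGraph (Fin n × Fin 2) where
  Adj x y := x.1 ≠ y.1
  symm := ⟨fun _ _ h => h.symm⟩
  loopless := ⟨fun _ h => h rfl⟩

end MRD

/-!
Let `N` be an independent set covering at least half of the vertices and suppose that each vertex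
of `N` has a neighbour in `P`. Then the labelling `-1` on `N`, `2` on `P \ N`, `1` elsewhere is
majority Roman dominating: a vertex of `N` sees only positive labels, one of them `2`. Hence
`γ_MR(G) ≤ n - 2|N| + |P|`.

In a forest without isolated vertices, `N` consists of a maximal independent set `A` of leaves
(all leaves, up to components `K₂`) together with some of the vertices outside `A` and its
neighbourhood `B`; the set `P` is `B` together with some more of these remaining vertices. To
select them, root each component at a leaf and read distances to the root modulo 4. A remaining
vertex has a parent and a child, so it sees both classes adjacent to its own. For a suitable
class `t`, the classes `t ± 1` make up at least half of the remaining vertices, and the class `t`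
is at most half of the others: put `t ± 1` into `N` and `t` into `P`. As `|B| ≤ |A|`, the set `N`
is large enough, and the weight is at most `(n + 7|B| - 5|A|) / 4`. A component `K₂` contributes
only one vertex to each of `A` and `B`, which lowers this value as `7 ≥ 5`.
-/

namespace MRD

section RomanLabelling

variable {V : Type*} [DecidableEq V]

/-- The labelling with value `-1` on `N`, `2` on the rest of `P` and `1` elsewhere, used to bound
the majority Roman domination number from above. On `N ∩ P` the value is `-1`, so that no
disjointness has to be carried around. -/
def romanLabel (N P : Finset V) (v : V) : ℤ :=
  if v ∈ N then -1 else if v ∈ P then 2 else 1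

lemma romanLabel_eq_neg_one_iff {N P : Finset V} {v : V} : romanLabel N P v = -1 ↔ v ∈ N := by
  unfold romanLabel
  split_ifs <;> simp_all

lemma romanLabel_pos {N P : Finset V} {v : V} (hv : v ∉ N) : 0 < romanLabel N P v := by
  unfold romanLabel
  split_ifs <;> simp

lemma romanLabel_eq_two {N P : Finset V} {v : V} (hN : v ∉ N) (hP : v ∈ P) :
    romanLabel N P v = 2 := by
  simp [romanLabel, hN, hP]

end RomanLabelling

section Domination

variable {V : Type*} [Fintype V] {G : SimpleGraph V}

lemma mrdNum_le_sum {f : V → ℤ} (hf : IsMRDF G f) : mrdNum G ≤ ∑ v, f v := by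
  refine csInf_le ⟨∑ _v : V, (-1), ?_⟩ ⟨f, hf, rfl⟩
  rintro _ ⟨g, hg, rfl⟩
  exact sum_le_sum fun v _ ↦ by rcases hg.1 v with h | h | h <;> omega

lemma closedNbhdSum_eq_add [DecidableRel G.Adj] (f : V → ℤ) (v : V) :
    closedNbhdSum G f v = f v + ∑ u ∈ G.neighborFinset v, f u := by
  classical
  rw [closedNbhdSum, ← sum_insert (G.notMem_neighborFinset_self v)]
  congr 1
  ext u
  simp [or_comm]

lemma sum_romanLabel_le [DecidableEq V] (N P : Finset V) :
    ∑ v, romanLabel N P v ≤ Fintype.card V - 2 * #N + #P := by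
  have pointwise (v : V) :
      romanLabel N P v ≤ 1 - 2 * (if v ∈ N then 1 else 0) + (if v ∈ P then 1 else 0) := by
    unfold romanLabel
    split_ifs <;> norm_num
  calc ∑ v, romanLabel N P v
      ≤ ∑ v, (1 - 2 * (if v ∈ N then 1 else 0) + (if v ∈ P then 1 else 0)) :=
        sum_le_sum fun v _ ↦ pointwise v
    _ = Fintype.card V - 2 * #N + #P := by
        simp [sum_add_distrib, sum_sub_distrib, mul_comm]

lemma one_le_closedNbhdSum_romanLabel [DecidableEq V] {N P : Finset V} (hN : IsIndepSet G N)
    {v w : V} (hv : v ∈ N) (hw : w ∈ P) (hvw : G.Adj v w) :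
    1 ≤ closedNbhdSum G (romanLabel N P) v := by
  classical
  have notMem {u : V} (hu : G.Adj v u) : u ∉ N := fun h ↦ hN v hv u h hu
  have two_le_sum : 2 ≤ ∑ u ∈ G.neighborFinset v, romanLabel N P u := by
    rw [← romanLabel_eq_two (notMem hvw) hw]
    refine single_le_sum (fun u hu ↦ ?_) ((G.mem_neighborFinset v w).2 hvw)
    exact (romanLabel_pos (notMem ((G.mem_neighborFinset v u).1 hu))).le
  rw [closedNbhdSum_eq_add, romanLabel_eq_neg_one_iff.2 hv]
  linarith

lemma isMRDF_romanLabel [DecidableEq V] {N P : Finset V} (hN : IsIndepSet G N)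
    (hNP : ∀ v ∈ N, ∃ w ∈ P, G.Adj v w) (hcard : Fintype.card V ≤ 2 * #N) :
    IsMRDF G (romanLabel N P) := by
  refine ⟨fun v ↦ ?_, hcard.trans ?_, fun v hv ↦ ?_⟩
  · unfold romanLabel
    split_ifs <;> simp
  · refine Nat.mul_le_mul_left 2 (card_le_card fun v hv ↦ ?_)
    obtain ⟨w, hw, hvw⟩ := hNP v hv
    simpa using one_le_closedNbhdSum_romanLabel hN hv hw hvw
  · have hvN := romanLabel_eq_neg_one_iff.1 hv
    obtain ⟨w, hw, hvw⟩ := hNP v hvN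
    exact ⟨w, hvw, romanLabel_eq_two (fun h ↦ hN v hvN w h hvw) hw⟩

lemma mrdNum_le_of_isIndepSet {N P : Finset V} (hN : IsIndepSet G N)
    (hNP : ∀ v ∈ N, ∃ w ∈ P, G.Adj v w) (hcard : Fintype.card V ≤ 2 * #N) :
    mrdNum G ≤ Fintype.card V - 2 * #N + #P := by
  classical
  exact (mrdNum_le_sum (isMRDF_romanLabel hN hNP hcard)).trans (sum_romanLabel_le N P)

end Domination

section Folding

variable {V : Type*} {G : SimpleGraph V}

/-- A folding of `G` onto the 4-cycle on `ZMod 4`: a graph homomorphism which is surjective on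
neighbourhoods at every vertex with at least two neighbours. It abstracts what is needed of the
distance to a root modulo 4 in a forest. -/
structure IsFolding (G : SimpleGraph V) (c : V → ZMod 4) : Prop where
  adj {v w : V} : G.Adj v w → c w = c v + 1 ∨ c w = c v - 1
  exists_add_one {v : V} : (G.neighborSet v).Nontrivial → ∃ w, G.Adj v w ∧ c w = c v + 1
  exists_sub_one {v : V} : (G.neighborSet v).Nontrivial → ∃ w, G.Adj v w ∧ c w = c v - 1

lemma exists_adj_dist_add_one_eq {r v : V} (hr : G.Reachable r v) (hne : v ≠ r) :
    ∃ u, G.Adj v u ∧ G.dist r u + 1 = G.dist r v := by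
  obtain ⟨p, hp⟩ := hr.symm.exists_walk_length_eq_dist
  cases p with
  | nil => exact absurd rfl hne
  | @cons _ u _ hvu q =>
    refine ⟨u, hvu, ?_⟩
    have hq := G.dist_le q
    have htri := hvu.symm.diff_dist_adj (u := r)
    rw [SimpleGraph.Walk.length_cons, G.dist_comm] at hp
    rw [G.dist_comm] at hq
    omega

lemma eq_of_adj_of_dist_add_one_eq (hG : G.IsAcyclic) {r u v w : V} (hr : G.Reachable r v)
    (hvu : G.Adj v u) (hvw : G.Adj v w) (hu : G.dist r u + 1 = G.dist r v)
    (hw : G.dist r w + 1 = G.dist r v) : u = w := by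
  obtain ⟨p, hp⟩ := (hr.trans hvu.reachable).exists_walk_length_eq_dist
  obtain ⟨q, hq⟩ := (hr.trans hvw.reachable).exists_walk_length_eq_dist
  have hpu : (p.concat hvu.symm).IsPath :=
    SimpleGraph.Walk.isPath_of_length_eq_dist _ (by rw [SimpleGraph.Walk.length_concat, hp, hu])
  have hqw : (q.concat hvw.symm).IsPath :=
    SimpleGraph.Walk.isPath_of_length_eq_dist _ (by rw [SimpleGraph.Walk.length_concat, hq, hw])
  have hpath := congrArg Subtype.val ((hG.subsingleton_path r v).elim ⟨_, hpu⟩ ⟨_, hqw⟩)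
  simpa using congrArg SimpleGraph.Walk.penultimate hpath

lemma exists_adj_dist_eq_add_one (hG : G.IsAcyclic) {r v : V} (hr : G.Reachable r v)
    (hv : (G.neighborSet v).Nontrivial) : ∃ u, G.Adj v u ∧ G.dist r u = G.dist r v + 1 := by
  obtain ⟨u, hvu, w, hvw, huw⟩ := hv
  by_contra! hfar
  have closer {x : V} (hvx : G.Adj v x) : G.dist r x + 1 = G.dist r v := by
    have := hG.dist_eq_dist_add_one_of_adj_of_reachable r hvx hr
    have := hfar x hvx
    omega
  exact huw (eq_of_adj_of_dist_add_one_eq hG hr hvu hvw (closer hvu) (closer hvw))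

lemma exists_subsingleton_neighborSet [Finite V] (hG : G.IsAcyclic) (C : G.ConnectedComponent) :
    ∃ r ∈ C, (G.neighborSet r).Subsingleton := by
  obtain ⟨a, rfl⟩ := C.exists_rep
  obtain ⟨r, har, hmax⟩ :=
    Set.exists_max_image {v | G.Reachable a v} (G.dist a) (Set.toFinite _) ⟨a, .rfl⟩
  refine ⟨r, SimpleGraph.ConnectedComponent.sound har.symm, ?_⟩
  by_contra hr
  obtain ⟨u, hru, hdist⟩ := exists_adj_dist_eq_add_one hG har (Set.not_subsingleton_iff.1 hr)
  have := hmax u (har.trans hru.reachable)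
  omega

lemma exists_isFolding_of_isAcyclic [Finite V] (hG : G.IsAcyclic) : ∃ c, IsFolding G c := by
  choose root hroot hend using exists_subsingleton_neighborSet hG
  set ρ : V → V := fun v ↦ root (G.connectedComponentMk v)
  have reachable (v : V) : G.Reachable (ρ v) v := SimpleGraph.ConnectedComponent.exact (hroot _)
  have root_eq {v w : V} (h : G.Adj v w) : ρ w = ρ v :=
    congrArg root (SimpleGraph.ConnectedComponent.sound h.symm.reachable)
  have ne_root {v : V} (hv : (G.neighborSet v).Nontrivial) : v ≠ ρ v := fun h ↦
    Set.not_subsingleton_iff.2 hv (h ▸ hend (G.connectedComponentMk v))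
  refine ⟨fun v ↦ (G.dist (ρ v) v : ZMod 4), fun {v w} hvw ↦ ?_, fun {v} hv ↦ ?_, fun {v} hv ↦ ?_⟩
  · rw [root_eq hvw]
    rcases hG.dist_eq_dist_add_one_of_adj_of_reachable _ hvw (reachable v) with h | h <;> simp [h]
  · obtain ⟨w, hvw, h⟩ := exists_adj_dist_eq_add_one hG (reachable v) hv
    exact ⟨w, hvw, by simp [root_eq hvw, h]⟩
  · obtain ⟨w, hvw, h⟩ := exists_adj_dist_add_one_eq (reachable v) (ne_root hv)
    exact ⟨w, hvw, by simp [root_eq hvw, ← h]⟩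

end Folding

section Levels

variable {V : Type*}

/-- The vertices of `M` in the two classes of the 4-cycle `ZMod 4` next to `t`; they will be
labelled `-1`, since their neighbours lie in the classes `t` and `t + 2`. -/
def flankingLevels (M : Finset V) (c : V → ZMod 4) (t : ZMod 4) : Finset V :=
  {v ∈ M | c v = t + 1 ∨ c v = t - 1}

lemma mem_flankingLevels {M : Finset V} {c : V → ZMod 4} {t : ZMod 4} {v : V} :
    v ∈ flankingLevels M c t ↔ v ∈ M ∧ (c v = t + 1 ∨ c v = t - 1) :=
  mem_filter

lemma card_flankingLevels (M : Finset V) (c : V → ZMod 4) (t : ZMod 4) :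
    #(flankingLevels M c t) = #{v ∈ M | c v = t + 1} + #{v ∈ M | c v = t - 1} := by
  classical
  rw [flankingLevels, filter_or, card_union_of_disjoint]
  refine disjoint_filter.2 fun v _ h h' ↦ ?_
  exact (by decide : ∀ t : ZMod 4, t + 1 ≠ t - 1) t (h.symm.trans h')

lemma exists_card_le_two_mul_card_flankingLevels (M : Finset V) (c : V → ZMod 4) :
    ∃ t, #M ≤ 2 * #(flankingLevels M c t) ∧
      2 * #{v ∈ M | c v = t} + #(flankingLevels M c t) ≤ #M := by
  let m : ZMod 4 → ℕ := fun t ↦ #{v ∈ M | c v = t}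
  have card_eq : #M = m 0 + m 1 + m 2 + m 3 :=
    (card_eq_sum_card_fiberwise fun v _ ↦ mem_univ (c v)).trans (Fin.sum_univ_four m)
  have flanking (t : ZMod 4) : #(flankingLevels M c t) = m (t + 1) + m (t - 1) :=
    card_flankingLevels M c t
  have h0 : #(flankingLevels M c 0) = m 1 + m 3 := flanking 0
  have h1 : #(flankingLevels M c 1) = m 2 + m 0 := flanking 1
  have h2 : #(flankingLevels M c 2) = m 3 + m 1 := flanking 2
  have h3 : #(flankingLevels M c 3) = m 0 + m 2 := flanking 3
  suffices ∃ t, #M ≤ 2 * #(flankingLevels M c t) ∧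
      2 * m t + #(flankingLevels M c t) ≤ #M from this
  rcases le_total (m 0 + m 2) (m 1 + m 3) with even_le | odd_le
  · rcases le_total (m 0) (m 2) with h | h
    · exact ⟨0, by omega, by omega⟩
    · exact ⟨2, by omega, by omega⟩
  · rcases le_total (m 1) (m 3) with h | h
    · exact ⟨1, by omega, by omega⟩
    · exact ⟨3, by omega, by omega⟩

end Levels

section Leaves

variable {V : Type*} {G : SimpleGraph V}

lemma exists_isIndepSet_subset_dominating (G : SimpleGraph V) (L : Finset V) :
    ∃ A ⊆ L, IsIndepSet G A ∧ ∀ v ∈ L, v ∉ A → ∃ u ∈ A, G.Adj u v := by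
  classical
  obtain ⟨A, hA⟩ := (L.powerset.filter (IsIndepSet G)).exists_maximal ⟨∅, by simp [IsIndepSet]⟩
  simp only [mem_filter, mem_powerset] at hA
  refine ⟨A, hA.prop.1, hA.prop.2, fun v hv hvA ↦ ?_⟩
  by_contra! hnadj
  have insert_indep : IsIndepSet G (insert v A) := by
    simp only [IsIndepSet, mem_insert, forall_eq_or_imp, SimpleGraph.irrefl, not_false_eq_true,
      true_and]
    exact ⟨fun u hu h ↦ hnadj u hu h.symm, fun u hu ↦ ⟨hnadj u hu, hA.prop.2 u hu⟩⟩
  exact hvA (hA.le_of_ge ⟨insert_subset hv hA.prop.1, insert_indep⟩ (subset_insert v A)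
    (mem_insert_self v A))

variable [Fintype V] [DecidableRel G.Adj]

/-- The set of leaves (pendant vertices) of `G`; its size is `l` in the bound. -/
def leaves (G : SimpleGraph V) [DecidableRel G.Adj] : Finset V := {v | G.degree v = 1}

/-- The set of support vertices of `G`; its size is `s` in the bound. They may be leaves
themselves, namely in a component `K₂`. -/
def supports (G : SimpleGraph V) [DecidableRel G.Adj] : Finset V :=
  {v | ∃ u, G.Adj v u ∧ G.degree u = 1}

lemma mem_leaves {v : V} : v ∈ leaves G ↔ G.degree v = 1 := by simp [leaves]

lemma mem_supports {v : V} : v ∈ supports G ↔ ∃ u, G.Adj v u ∧ G.degree u = 1 := by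
  simp [supports]

lemma nontrivial_neighborSet {v : V} (h0 : G.degree v ≠ 0) (h1 : G.degree v ≠ 1) :
    (G.neighborSet v).Nontrivial := by
  rw [← G.coe_neighborFinset, nontrivial_coe, ← one_lt_card_iff_nontrivial,
    G.card_neighborFinset_eq_degree]
  omega

variable [DecidableEq V]

/-- The union `N(A)` of the open neighbourhoods of the vertices of `A`; it may meet `A`. For a set
of leaves these are support vertices, which will be labelled `2`. -/
def openNbhd (G : SimpleGraph V) [DecidableRel G.Adj] (A : Finset V) : Finset V :=
  A.biUnion fun v ↦ G.neighborFinset v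

lemma mem_openNbhd {A : Finset V} {v : V} : v ∈ openNbhd G A ↔ ∃ u ∈ A, G.Adj u v := by
  simp [openNbhd]

/-- The vertices neither in `A` nor adjacent to a vertex of `A`, to be labelled according to their
class in a folding. -/
def remoteVertices (G : SimpleGraph V) [DecidableRel G.Adj] (A : Finset V) : Finset V :=
  (A ∪ openNbhd G A)ᶜ

lemma mem_remoteVertices {A : Finset V} {v : V} :
    v ∈ remoteVertices G A ↔ v ∉ A ∧ v ∉ openNbhd G A := by
  simp [remoteVertices]

lemma disjoint_openNbhd {A : Finset V} (hA : IsIndepSet G A) : Disjoint A (openNbhd G A) := by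
  refine disjoint_left.2 fun v hv hvN ↦ ?_
  obtain ⟨u, hu, huv⟩ := mem_openNbhd.1 hvN
  exact hA u hu v hv huv

lemma card_openNbhd_le {A : Finset V} (hA : A ⊆ leaves G) : #(openNbhd G A) ≤ #A := by
  simpa [openNbhd] using card_biUnion_le_card_mul A (fun v ↦ G.neighborFinset v) 1
    fun v hv ↦ (mem_leaves.1 (hA hv)).le

lemma openNbhd_subset_supports {A : Finset V} (hA : A ⊆ leaves G) :
    openNbhd G A ⊆ supports G := fun v hv ↦ by
  obtain ⟨u, hu, huv⟩ := mem_openNbhd.1 hv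
  exact mem_supports.2 ⟨u, huv.symm, mem_leaves.1 (hA hu)⟩

lemma card_leaves_add_card_openNbhd_le {A : Finset V} (hA : A ⊆ leaves G)
    (hind : IsIndepSet G A) (hdom : ∀ v ∈ leaves G, v ∉ A → ∃ u ∈ A, G.Adj u v) :
    #(leaves G) + #(openNbhd G A) ≤ #(supports G) + #A := by
  have uncovered : leaves G \ A ⊆ openNbhd G (A ∩ supports G) := fun v hv ↦ by
    obtain ⟨hvL, hvA⟩ := mem_sdiff.1 hv
    obtain ⟨u, hu, huv⟩ := hdom v hvL hvA
    exact mem_openNbhd.2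
      ⟨u, mem_inter.2 ⟨hu, mem_supports.2 ⟨v, huv, mem_leaves.1 hvL⟩⟩, huv⟩
  have inter_subset : A ∩ supports G ⊆ supports G \ openNbhd G A := fun v hv ↦ by
    obtain ⟨hvA, hvS⟩ := mem_inter.1 hv
    exact mem_sdiff.2 ⟨hvS, disjoint_left.1 (disjoint_openNbhd hind) hvA⟩
  have sdiff_le : #(leaves G \ A) ≤ #(supports G \ openNbhd G A) :=
    (card_le_card uncovered).trans <| (card_openNbhd_le (inter_subset_left.trans hA)).trans <|
      card_le_card inter_subset
  have := card_sdiff_add_card_eq_card hA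
  have := card_sdiff_add_card_eq_card (openNbhd_subset_supports hA)
  omega

end Leaves

section Bound

variable {V : Type*} [Fintype V] {G : SimpleGraph V} [DecidableRel G.Adj] {c : V → ZMod 4}

lemma isIndepSet_union_flankingLevels [DecidableEq V] (hc : IsFolding G c) {A : Finset V}
    (hA : IsIndepSet G A) (t : ZMod 4) :
    IsIndepSet G (A ∪ flankingLevels (remoteVertices G A) c t) := by
  have not_adj_of_mem {u v : V} (hu : u ∈ A) (hv : v ∈ flankingLevels (remoteVertices G A) c t) :
      ¬ G.Adj u v := fun huv ↦
    (mem_remoteVertices.1 (mem_flankingLevels.1 hv).1).2 (mem_openNbhd.2 ⟨u, hu, huv⟩)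
  intro u hu v hv huv
  rcases mem_union.1 hu with hu | hu <;> rcases mem_union.1 hv with hv | hv
  · exact hA u hu v hv huv
  · exact not_adj_of_mem hu hv huv
  · exact not_adj_of_mem hv hu huv.symm
  · have parity : ∀ t x y : ZMod 4, x = t + 1 ∨ x = t - 1 → y = t + 1 ∨ y = t - 1 →
        ¬(y = x + 1 ∨ y = x - 1) := by decide
    exact parity t _ _ (mem_flankingLevels.1 hu).2 (mem_flankingLevels.1 hv).2 (hc.adj huv)

lemma exists_adj_mem_openNbhd_union_level [DecidableEq V] (hc : IsFolding G c) {A : Finset V}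
    (hA : A ⊆ leaves G) (hR : ∀ v ∈ remoteVertices G A, (G.neighborSet v).Nontrivial) (t : ZMod 4) :
    ∀ v ∈ A ∪ flankingLevels (remoteVertices G A) c t,
      ∃ w ∈ openNbhd G A ∪ {w ∈ remoteVertices G A | c w = t}, G.Adj v w := by
  intro v hv
  rcases mem_union.1 hv with hvA | hvR
  · obtain ⟨w, hvw⟩ := (G.degree_pos_iff_exists_adj v).1 (by rw [mem_leaves.1 (hA hvA)]; simp)
    exact ⟨w, mem_union_left _ (mem_openNbhd.2 ⟨v, hvA, hvw⟩), hvw⟩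
  · obtain ⟨hvR, hlevel⟩ := mem_flankingLevels.1 hvR
    obtain ⟨w, hvw, hw⟩ : ∃ w, G.Adj v w ∧ c w = t := by
      rcases hlevel with h | h
      · simpa [h] using hc.exists_sub_one (hR v hvR)
      · simpa [h] using hc.exists_add_one (hR v hvR)
    have hwA : w ∉ A := fun h ↦
      (mem_remoteVertices.1 hvR).2 (mem_openNbhd.2 ⟨w, h, hvw.symm⟩)
    refine ⟨w, ?_, hvw⟩
    by_cases hwB : w ∈ openNbhd G A
    · exact mem_union_left _ hwB
    · exact mem_union_right _ (mem_filter.2 ⟨mem_remoteVertices.2 ⟨hwA, hwB⟩, hw⟩)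

lemma four_mul_mrdNum_le_of_subset_leaves [DecidableEq V] (hc : IsFolding G c) {A : Finset V}
    (hA : A ⊆ leaves G) (hind : IsIndepSet G A)
    (hR : ∀ v ∈ remoteVertices G A, (G.neighborSet v).Nontrivial) :
    4 * mrdNum G ≤ Fintype.card V + 7 * #(openNbhd G A) - 5 * #A := by
  obtain ⟨t, half_le, light⟩ :=
    exists_card_le_two_mul_card_flankingLevels (remoteVertices G A) c
  have card_V : Fintype.card V = #A + #(openNbhd G A) + #(remoteVertices G A) := by
    rw [← card_union_of_disjoint (disjoint_openNbhd hind), remoteVertices, card_add_card_compl]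
  have card_N : #(A ∪ flankingLevels (remoteVertices G A) c t) =
      #A + #(flankingLevels (remoteVertices G A) c t) :=
    card_union_of_disjoint <| disjoint_left.2 fun v hvA hvR ↦
      (mem_remoteVertices.1 (mem_flankingLevels.1 hvR).1).1 hvA
  have card_P := card_union_le (openNbhd G A) {v ∈ remoteVertices G A | c v = t}
  have card_B := card_openNbhd_le hA
  have bound := mrdNum_le_of_isIndepSet (isIndepSet_union_flankingLevels hc hind t)
    (exists_adj_mem_openNbhd_union_level hc hA hR t) (by omega)
  omega

lemma four_mul_mrdNum_le_of_isFolding (hc : IsFolding G c) (hG : ∀ v, G.degree v ≠ 0) :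
    4 * mrdNum G ≤ Fintype.card V + 7 * #(supports G) - 5 * #(leaves G) := by
  classical
  obtain ⟨A, hA, hind, hdom⟩ := exists_isIndepSet_subset_dominating G (leaves G)
  have hR (v : V) (hv : v ∈ remoteVertices G A) : (G.neighborSet v).Nontrivial := by
    obtain ⟨hvA, hvB⟩ := mem_remoteVertices.1 hv
    exact nontrivial_neighborSet (hG v) fun hdeg ↦
      hvB (mem_openNbhd.2 (hdom v (mem_leaves.2 hdeg) hvA))
  have bound := four_mul_mrdNum_le_of_subset_leaves hc hA hind hR
  have exchange := card_leaves_add_card_openNbhd_le hA hind hdom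
  have card_B := card_le_card (openNbhd_subset_supports hA)
  omega

end Bound

end MRD

theorem mrdNum_tree_le_supports_leaves_general {V : Type*} [Fintype V] (G : SimpleGraph V)
    [DecidableRel G.Adj] (hG : G.IsAcyclic) (hdeg : ∀ v, G.degree v ≠ 0) (s l : ℕ)
    (hl : l = (Finset.univ.filter (fun v : V => G.degree v = 1)).card)
    (hs : s = (Finset.univ.filter (fun v : V => ∃ u, G.Adj v u ∧ G.degree u = 1)).card) :
    MRD.mrdNum G ≤ ⌊((Fintype.card V : ℚ) + 7 * s - 5 * l) / 4⌋ := by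
  obtain ⟨c, hc⟩ := MRD.exists_isFolding_of_isAcyclic hG
  have bound : 4 * MRD.mrdNum G ≤ Fintype.card V + 7 * s - 5 * l := by
    rw [hs, hl]
    exact MRD.four_mul_mrdNum_le_of_isFolding hc hdeg
  rw [Int.le_floor, le_div_iff₀' (by norm_num)]
  exact_mod_cast bound

/-- Let `T` be a tree of order `n ≥ 2` with `s` support vertices and `l` leaves.
Then `γ_MR(T) ≤ ⌈(n + 7s - 5l)/4⌉`. -/
theorem mrdNum_tree_le_supports_leaves {V : Type*} [Fintype V] (T : SimpleGraph V)
    [DecidableRel T.Adj] (hT : T.IsTree) (hn : 2 ≤ Fintype.card V) (s l : ℕ)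
    (hl : l = (Finset.univ.filter (fun v : V => T.degree v = 1)).card)
    (hs : s = (Finset.univ.filter (fun v : V => ∃ u, T.Adj v u ∧ T.degree u = 1)).card) :
    MRD.mrdNum T ≤ ⌈((Fintype.card V : ℚ) + 7 * s - 5 * l) / 4⌉ := by
  have : Nontrivial V := Fintype.one_lt_card_iff_nontrivial.1 hn
  exact (mrdNum_tree_le_supports_leaves_general T hT.isAcyclic
    (fun v ↦ (hT.connected.preconnected.degree_pos_of_nontrivial v).ne') s l hl hs).trans
    (Int.floor_le_ceil _)
end

section
/- Let G be a finite simple graph of order n ≥ 2 with maximum degree Δ ≥ 1. Then γ_MR(G) ≥ n(2 − Δ)/(Δ + 1); equivalently, every MRDF f on G satisfies (Δ + 1)·w(f) ≥ n(2 − Δ). -/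
open Finset

/-!
Put `A = {v | f v < 1}` and `B = {v | 2 ≤ f v}`. Every vertex of `A` has a neighbor in `B`, and a
vertex of `B` has at most `Δ` neighbors, so `#A ≤ #B * Δ`. The increasing affine function
`x ↦ (Δ + 1) * x - (2 - Δ)` takes the values `-3`, `2 * Δ - 1 > 0` and `3 * Δ` at `-1`, `1` and
`2`, so its sum over the values of `f` is at least `3 * Δ * #B - 3 * #A ≥ 0`.
-/

section Weight

variable {V : Type*} {G : SimpleGraph V} [G.LocallyFinite] {k : ℕ}

theorem card_le_card_mul_of_forall_exists_adj {A B : Finset V}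
    (hdeg : ∀ b ∈ B, G.degree b ≤ k) (hadj : ∀ a ∈ A, ∃ b ∈ B, G.Adj a b) : #A ≤ #B * k := by
  classical
  have hcover : A ⊆ B.biUnion (G.neighborFinset ·) := fun a ha ↦ by
    obtain ⟨b, hb, hab⟩ := hadj a ha
    exact mem_biUnion.2 ⟨b, hb, (G.mem_neighborFinset b a).2 hab.symm⟩
  exact (card_le_card hcover).trans (card_biUnion_le_card_mul _ _ _ hdeg)

theorem mrdNum_lower_bound_general [Fintype V] {R : Type*} [CommRing R] [LinearOrder R]
    [IsStrictOrderedRing R] {f : V → R} (hk : 1 ≤ k) (hdeg : ∀ v, 2 ≤ f v → G.degree v ≤ k)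
    (hf : ∀ v, -1 ≤ f v) (hadj : ∀ u, f u < 1 → ∃ w, G.Adj u w ∧ 2 ≤ f w) :
    (Fintype.card V : R) * (2 - k) ≤ (k + 1) * ∑ v, f v := by
  have hcard : (#{v | f v < 1} : R) ≤ #{v | 2 ≤ f v} * k := by
    exact_mod_cast card_le_card_mul_of_forall_exists_adj (G := G)
      (by simpa using hdeg) (by simpa [and_comm] using hadj)
  have hpointwise (v : V) : 3 * k * (if 2 ≤ f v then 1 else 0) - 3 * (if f v < 1 then 1 else 0)
      ≤ (k + 1) * f v - (2 - k) := by
    have hk' : (1 : R) ≤ k := by exact_mod_cast hk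
    split_ifs <;> nlinarith [hf v]
  have hsum : 3 * k * (#{v | 2 ≤ f v} : R) - 3 * #{v | f v < 1}
      ≤ (k + 1) * ∑ v, f v - Fintype.card V * (2 - k) := by
    have := sum_le_sum fun v (_ : v ∈ univ) ↦ hpointwise v
    rwa [sum_sub_distrib, sum_sub_distrib, ← mul_sum, ← mul_sum, ← mul_sum, sum_boole, sum_boole,
      sum_const, card_univ, nsmul_eq_mul] at this
  linarith

end Weight

namespace MRD

variable {V : Type*} [Fintype V] {G : SimpleGraph V} {f : V → ℤ}

theorem IsMRDF.neg_one_le (hf : IsMRDF G f) (v : V) : -1 ≤ f v := by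
  have := hf.1 v
  omega

theorem IsMRDF.exists_adj_two_le (hf : IsMRDF G f) {u : V} (hu : f u < 1) :
    ∃ w, G.Adj u w ∧ 2 ≤ f w := by
  have hu' : f u = -1 := by
    have := hf.1 u
    omega
  exact (hf.2.2 u hu').imp fun _ ↦ And.imp_right Eq.ge

theorem isMRDF_one (G : SimpleGraph V) : IsMRDF G 1 := by
  have hpos (v : V) : 1 ≤ closedNbhdSum G 1 v :=
    single_le_sum (f := (1 : V → ℤ)) (fun _ _ ↦ zero_le_one) (by simp : v ∈ _)
  refine ⟨by simp, ?_, by simp⟩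
  simp only [hpos, filter_true, card_univ]
  omega

theorem isLeast_mrdNum (G : SimpleGraph V) :
    IsLeast {w : ℤ | ∃ f : V → ℤ, IsMRDF G f ∧ w = ∑ v, f v} (mrdNum G) := by
  have hbdd : BddBelow {w : ℤ | ∃ f : V → ℤ, IsMRDF G f ∧ w = ∑ v, f v} := by
    refine ⟨∑ _v : V, -1, ?_⟩
    rintro _ ⟨f, hf, rfl⟩
    exact sum_le_sum fun v _ ↦ hf.neg_one_le v
  exact ⟨Int.csInf_mem ⟨_, 1, isMRDF_one G, rfl⟩ hbdd, fun _ hw ↦ csInf_le hbdd hw⟩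

theorem div_le_mrdNum_iff {a b : ℤ} (hb : 0 < b) :
    (a / b : ℚ) ≤ mrdNum G ↔ ∀ f : V → ℤ, IsMRDF G f → a ≤ b * ∑ v, f v := by
  have hcast : (a / b : ℚ) ≤ mrdNum G ↔ a ≤ b * mrdNum G := by
    rw [div_le_iff₀' (by exact_mod_cast hb)]
    norm_cast
  rw [hcast]
  constructor
  · intro h f hf
    have hle : mrdNum G ≤ ∑ v, f v := (isLeast_mrdNum G).2 ⟨f, hf, rfl⟩
    exact h.trans (mul_le_mul_of_nonneg_left hle hb.le)
  · intro h
    obtain ⟨f, hf, hmin⟩ := (isLeast_mrdNum G).1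
    exact hmin ▸ h f hf

end MRD

/-- Let `G` be a graph of order `n ≥ 2` with maximum degree `Δ ≥ 1`. Then
`γ_MR(G) ≥ n(2 - Δ)/(Δ + 1)`; equivalently, every MRDF `f` on `G` satisfies
`(Δ + 1) · w(f) ≥ n(2 - Δ)`. -/
theorem mrdNum_lower_bound {V : Type*} [Fintype V] (G : SimpleGraph V)
    [DecidableRel G.Adj] (hn : 2 ≤ Fintype.card V) (hΔ : 1 ≤ G.maxDegree) :
    ((Fintype.card V : ℚ) * (2 - G.maxDegree)) / (G.maxDegree + 1) ≤ (MRD.mrdNum G : ℚ) ∧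
    ∀ f : V → ℤ, MRD.IsMRDF G f →
      (Fintype.card V : ℤ) * (2 - G.maxDegree) ≤ ((G.maxDegree : ℤ) + 1) * ∑ v, f v := by
  have hweight (f : V → ℤ) (hf : MRD.IsMRDF G f) :=
    mrdNum_lower_bound_general hΔ (fun v _ ↦ G.degree_le_maxDegree v) hf.neg_one_le
      fun _ ↦ hf.exists_adj_two_le
  exact ⟨by exact_mod_cast (MRD.div_le_mrdNum_iff (by positivity)).2 hweight, hweight⟩
end
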